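/- Let ρ be a quasi-periodic labelling. Then every element of G_ρ fixes a point of ℝ: for every g ∈ G_ρ there exists x ∈ ℝ with g(x) = x. -/

import Mathlib

/-! ### Letters, labellings and quasi-periodicity -/

/-- The four letters `a, b, a⁻¹, b⁻¹`. -/
inductive Letter : Type
  | a : Letter
  | b : Letter
  | A : Letter  -- `a⁻¹`
  | B : Letter  -- `b⁻¹`
  deriving DecidableEq

/-- The formal inverse of a letter. -/
def Letter.inv : Letter → Letter
  | .a => .A
  | .A => .a
  | .b => .B
  | .B => .b

/-- We encode the set of half-integers `½ℤ` by `ℤ` via `m ↦ m / 2`; integer points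
correspond to even indices and proper half-integer points to odd indices.
A labelling assigns `a^{±1}` to integer points and `b^{±1}` to half-integer points. -/
def IsLabelling (ρ : ℤ → Letter) : Prop :=
  ∀ m : ℤ, (Even m → ρ m = Letter.a ∨ ρ m = Letter.A) ∧
    (Odd m → ρ m = Letter.b ∨ ρ m = Letter.B)

/-- The word of the labelling `ρ` along the block `{k, k+1, …, k+n}` (in the
half-integer encoding, the block of size `n+1` starting at `k/2`). -/
def blockWord (ρ : ℤ → Letter) (k : ℤ) (n : ℕ) : List Letter :=
  (List.range (n + 1)).map fun i => ρ (k + i)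

/-- The formal inverse of a word: reverse the word and invert each letter. -/
def wordInv (w : List Letter) : List Letter :=
  (w.map Letter.inv).reverse

/-- A labelling is quasi-periodic if (1) every subword of the labelling appears as a
subword (string of consecutive letters) of every sufficiently large block, and (2) the
formal inverse of every subword of the labelling is again a subword of the labelling. -/
def IsQuasiPeriodic (ρ : ℤ → Letter) : Prop :=
  IsLabelling ρ ∧
    (∀ (k : ℤ) (n : ℕ), ∃ N : ℕ, ∀ (k' : ℤ) (n' : ℕ), N ≤ n' + 1 →
      (blockWord ρ k n) <:+: (blockWord ρ k' n')) ∧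
    (∀ (k : ℤ) (n : ℕ), ∃ k' : ℤ, blockWord ρ k' n = wordInv (blockWord ρ k n))

/-! ### Thompson's group `F` and the subgroup `H`

Orientation-preserving homeomorphisms of `[0,1]` are realised as order-automorphisms
of `ℝ` that are the identity outside `[0,1]`; orientation-preserving homeomorphisms of
the line are order-automorphisms of `ℝ`. -/

/-- A dyadic rational real number, i.e. an element of `ℤ[1/2]`. -/
def IsDyadic (x : ℝ) : Prop :=
  ∃ (a : ℤ) (b : ℕ), x = (a : ℝ) / 2 ^ b

/-- Membership in Thompson's group `F`: the identity outside `[0,1]`, and on `[0,1]`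
piecewise linear with breakpoints in `ℤ[1/2]` and slopes integer powers of `2`. -/
def InThompsonF (f : ℝ ≃o ℝ) : Prop :=
  (∀ x : ℝ, x ∉ Set.Icc (0 : ℝ) 1 → f x = x) ∧
    ∃ (m : ℕ) (x : Fin (m + 1) → ℝ), x 0 = 0 ∧ x (Fin.last m) = 1 ∧ StrictMono x ∧
      (∀ i, IsDyadic (x i)) ∧
      ∀ i : Fin m, ∃ (k : ℤ) (c : ℝ),
        ∀ t ∈ Set.Icc (x i.castSucc) (x i.succ), f t = 2 ^ k * t + c

/-- Membership in the subgroup `H ≤ F` of elements whose slopes at `0` and `1`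
coincide. -/
def InH (f : ℝ ≃o ℝ) : Prop :=
  InThompsonF f ∧
    ∃ (k : ℤ) (ε : ℝ), 0 < ε ∧ (∀ t ∈ Set.Icc (0 : ℝ) ε, f t = 2 ^ k * t) ∧
      ∀ t ∈ Set.Icc (1 - ε) (1 : ℝ), f t = 1 + 2 ^ k * (t - 1)

/-! ### The generators of `G_ρ` -/

/-- `ζ` is the homeomorphism of `ℝ` which on each `[n, n+1]` is the conjugate of `ν`
(a homeomorphism of `[0,1]`) by the orientation-preserving isometry `[n,n+1] → [0,1]`
if `ρ(n + ½) = b`, and by the orientation-reversing isometry if `ρ(n + ½) = b⁻¹`.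
(In the encoding of `½ℤ` by `ℤ`, the point `n + ½` has index `2n + 1`.) -/
def IsZeta (ρ : ℤ → Letter) (ν ζ : ℝ ≃o ℝ) : Prop :=
  ∀ n : ℤ, ∀ x ∈ Set.Icc (n : ℝ) (n + 1),
    (ρ (2 * n + 1) = Letter.b → ζ x = n + ν (x - n)) ∧
    (ρ (2 * n + 1) = Letter.B → ζ x = (n + 1) - ν ((n + 1) - x))

/-- `χ` is the homeomorphism of `ℝ` which on each `[n-½, n+½]` is the conjugate of `ν`
by the orientation-preserving isometry `[n-½, n+½] → [0,1]` if `ρ(n) = a`, and by the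
orientation-reversing isometry if `ρ(n) = a⁻¹`. -/
def IsChi (ρ : ℤ → Letter) (ν χ : ℝ ≃o ℝ) : Prop :=
  ∀ n : ℤ, ∀ x ∈ Set.Icc ((n : ℝ) - 1/2) ((n : ℝ) + 1/2),
    (ρ (2 * n) = Letter.a → χ x = ((n : ℝ) - 1/2) + ν (x - ((n : ℝ) - 1/2))) ∧
    (ρ (2 * n) = Letter.A → χ x = ((n : ℝ) + 1/2) - ν (((n : ℝ) + 1/2) - x))

/-! ### Bounded cohomology in degree two -/

/-- A bounded 2-cocycle on `G` with trivial real coefficients. -/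
def IsBounded2Cocycle {G : Type*} [Group G] (ω : G → G → ℝ) : Prop :=
  (∃ C : ℝ, ∀ g h : G, |ω g h| ≤ C) ∧
    ∀ g₁ g₂ g₃ : G, ω g₂ g₃ - ω (g₁ * g₂) g₃ + ω g₁ (g₂ * g₃) - ω g₁ g₂ = 0

/-- `ω` is the coboundary of a bounded real-valued function. -/
def IsCoboundaryOfBounded {G : Type*} [Group G] (ω : G → G → ℝ) : Prop :=
  ∃ φ : G → ℝ, (∃ C : ℝ, ∀ g : G, |φ g| ≤ C) ∧
    ∀ g h : G, ω g h = φ h - φ (g * h) + φ g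

/-- A group is 2-boundedly acyclic if `H²_b(G; ℝ) = 0`, i.e. every bounded 2-cocycle is
the coboundary of a bounded function. -/
def Is2BoundedlyAcyclic (G : Type*) [Group G] : Prop :=
  ∀ ω : G → G → ℝ, IsBounded2Cocycle ω → IsCoboundaryOfBounded ω

/-- A 2-cocycle is homogeneous if it vanishes on powers of a single element. -/
def IsHomogeneous {G : Type*} [Group G] (ω : G → G → ℝ) : Prop :=
  ∀ (g : G) (i j : ℤ), ω (g ^ i) (g ^ j) = 0

/-!
Call `x ↦ c - x`, with `c` an integer, an inverting reflection near a point if it carries the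
labels close to that point to their inverses. Reflecting a cell with label `ℓ` onto a cell with
label `ℓ⁻¹` exchanges the two isometries that define the generators, so each generator commutes
with every reflection that inverts the labels near the point of evaluation. Since the generators
also have bounded displacement, this locality survives products and inverses, and each `g` in the
group commutes at `x` with every reflection inverting a long enough block around `x`. Closure of
the subwords of `ρ` under inversion provides such a reflection, and its centre `c / 2` has the right
parity because inversion does not exchange `a` with `b`. So `g (c - x) - (c - x) = -(g x - x)`, and
the intermediate value theorem gives a fixed point between `x` and `c - x`.
-/

/-! ### Reflections inverting a labelling -/

/-- The reflection `y ↦ c - y` inverts the labels of `ρ` at distance at most `r` from `x`. In the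
encoding of `½ℤ` by `ℤ`, it sends the index `m` of the point `m / 2` to `2 * c - m`. -/
def InvertsNear (ρ : ℤ → Letter) (c : ℤ) (x r : ℝ) : Prop :=
  ∀ m : ℤ, |(m : ℝ) / 2 - x| ≤ r → ρ (2 * c - m) = (ρ m).inv

lemma InvertsNear.of_abs_sub_add_le {ρ : ℤ → Letter} {c : ℤ} {x y r s : ℝ}
    (h : InvertsNear ρ c x r) (hxy : |y - x| + s ≤ r) : InvertsNear ρ c y s :=
  fun m hm => h m (by linarith [abs_sub_le ((m : ℝ) / 2) y x])

lemma blockWord_getElem? (ρ : ℤ → Letter) (k : ℤ) {n i : ℕ} (hi : i ≤ n) :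
    (blockWord ρ k n)[i]? = some (ρ (k + i)) := by
  simp [blockWord, ← List.map_eq_flatMap, Nat.lt_succ_iff.2 hi]

lemma apply_sub_eq_inv_of_blockWord_eq_wordInv {ρ : ℤ → Letter} {k k' : ℤ} {n : ℕ}
    (h : blockWord ρ k' n = wordInv (blockWord ρ k n)) {m : ℤ} (hkm : k ≤ m) (hmk : m ≤ k + n) :
    ρ (k + k' + n - m) = (ρ m).inv := by
  obtain ⟨i, rfl⟩ := Int.le.dest hkm
  have hi : i ≤ n := by omega
  have hletter : ρ (k' + (n - i : ℕ)) = (ρ (k + i)).inv := by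
    have hlen : (blockWord ρ k n).length = n + 1 := by simp [blockWord]
    have hget := congrArg (·[n - i]?) h
    simp only [wordInv] at hget
    rw [List.getElem?_reverse (by simp [hlen]), List.getElem?_map, List.length_map, hlen,
      Nat.add_sub_cancel, Nat.sub_sub_self hi, blockWord_getElem? ρ k hi,
      blockWord_getElem? ρ k' (n.sub_le i)] at hget
    simpa using hget
  convert hletter using 2
  omega

lemma IsLabelling.even_add_of_eq_inv {ρ : ℤ → Letter} (hρ : IsLabelling ρ) {i j : ℤ}
    (h : ρ j = (ρ i).inv) : Even (i + j) := by
  have hi := hρ i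
  have hj := hρ j
  rw [Int.even_add]
  grind [Letter.inv, Int.not_even_iff_odd]

lemma exists_invertsNear {ρ : ℤ → Letter} (hρ : IsLabelling ρ)
    (hinv : ∀ (k : ℤ) (n : ℕ), ∃ k' : ℤ, blockWord ρ k' n = wordInv (blockWord ρ k n)) (x r : ℝ) :
    ∃ c : ℤ, InvertsNear ρ c x r := by
  set k := ⌊2 * (x - r)⌋
  set n := (⌈2 * (x + r)⌉ - k).toNat
  obtain ⟨k', hk'⟩ := hinv k n
  have hblock {m : ℤ} := apply_sub_eq_inv_of_blockWord_eq_wordInv hk' (m := m)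
  obtain ⟨c, hc⟩ := hρ.even_add_of_eq_inv (hblock le_rfl (by omega))
  refine ⟨c, fun m hm => ?_⟩
  obtain ⟨hlo, hhi⟩ := abs_le.1 hm
  have hkm : k ≤ m := by
    exact_mod_cast (Int.floor_le (2 * (x - r))).trans (by linarith : 2 * (x - r) ≤ m)
  have hmk : m ≤ ⌈2 * (x + r)⌉ := by
    exact_mod_cast (by linarith : (m : ℝ) ≤ 2 * (x + r)).trans (Int.le_ceil _)
  rw [← hblock hkm (by omega)]
  congr 1
  omega

/-! ### Local equivariance -/

/-- A self-map of the line that moves points by at most `r` and commutes at `x` with each reflection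
`y ↦ c - y`, `c ∈ ℤ`, inverting the labels of `ρ` at distance at most `r` from `x`. The single
radius `r` serves both purposes, so that compositions only add radii. -/
structure IsReflectionEquivariant (ρ : ℤ → Letter) (r : ℝ) (g : ℝ → ℝ) : Prop where
  abs_apply_sub_le : ∀ x, |g x - x| ≤ r
  map_sub : ∀ (c : ℤ) (x : ℝ), InvertsNear ρ c x r → g (c - x) = c - g x

namespace IsReflectionEquivariant

variable {ρ : ℤ → Letter} {r s : ℝ} {g h : ℝ → ℝ}

protected lemma id : IsReflectionEquivariant ρ 0 id :=
  ⟨by simp, by simp⟩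

protected lemma comp (hg : IsReflectionEquivariant ρ r g) (hh : IsReflectionEquivariant ρ s h) :
    IsReflectionEquivariant ρ (r + s) (g ∘ h) where
  abs_apply_sub_le x :=
    (abs_sub_le (g (h x)) (h x) x).trans
      (add_le_add (hg.abs_apply_sub_le (h x)) (hh.abs_apply_sub_le x))
  map_sub c x hx := by
    have hr : 0 ≤ r := (abs_nonneg _).trans (hg.abs_apply_sub_le x)
    have hx_s : InvertsNear ρ c x s := hx.of_abs_sub_add_le (by simpa using hr)
    have hhx_r : InvertsNear ρ c (h x) r :=
      hx.of_abs_sub_add_le (by linarith [hh.abs_apply_sub_le x])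
    rw [Function.comp_apply, hh.map_sub c x hx_s, hg.map_sub c (h x) hhx_r, Function.comp_apply]

lemma of_inverse (hg : IsReflectionEquivariant ρ r g) (hleft : Function.LeftInverse h g)
    (hright : Function.RightInverse h g) : IsReflectionEquivariant ρ (2 * r) h := by
  have hdisp (x : ℝ) : |h x - x| ≤ r := by
    simpa only [hright x, abs_sub_comm] using hg.abs_apply_sub_le (h x)
  refine ⟨fun x => by linarith [hdisp x, abs_nonneg (h x - x)], fun c x hx => ?_⟩
  have hhx : InvertsNear ρ c (h x) r := hx.of_abs_sub_add_le (by linarith [hdisp x])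
  calc h (c - x) = h (c - g (h x)) := by rw [hright x]
    _ = h (g (c - h x)) := by rw [hg.map_sub c (h x) hhx]
    _ = c - h x := hleft _

end IsReflectionEquivariant

/-- The group of order automorphisms of the line that are reflection-equivariant with respect to `ρ`
at some radius. -/
def reflectionEquivariantSubgroup (ρ : ℤ → Letter) : Subgroup (ℝ ≃o ℝ) where
  carrier := {g | ∃ r, IsReflectionEquivariant ρ r g}
  one_mem' := ⟨0, .id⟩
  mul_mem' := fun ⟨r, hg⟩ ⟨s, hh⟩ => ⟨r + s, hg.comp hh⟩
  inv_mem' := fun {g} ⟨r, hg⟩ => ⟨2 * r, hg.of_inverse g.symm_apply_apply g.apply_symm_apply⟩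

/-! ### The generators -/

/-- The exponent `±1` of a letter. -/
def Letter.sign : Letter → ℝ
  | .a | .b => 1
  | .A | .B => -1

lemma Letter.sign_inv (ℓ : Letter) : ℓ.inv.sign = -ℓ.sign := by
  cases ℓ <;> simp [Letter.inv, Letter.sign]

lemma Letter.abs_sign (ℓ : Letter) : |ℓ.sign| = 1 := by
  cases ℓ <;> simp [Letter.sign]

/-- On each unit interval centred at a point `k / 2` with `k ≡ e` modulo `2`, the map `f` is the
conjugate of `μ`, given in a coordinate centred at `0`, by the isometry whose orientation is the
exponent of `ρ k`. The value `e = 1` describes the maps `ζ` and `e = 0` the maps `χ`. -/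
def IsCellwiseConj (ρ : ℤ → Letter) (e : ℤ) (μ f : ℝ → ℝ) : Prop :=
  ∀ k : ℤ, k ≡ e [ZMOD 2] → ∀ t : ℝ, |t| ≤ 1 / 2 →
    f (k / 2 + t) = k / 2 + (ρ k).sign * μ ((ρ k).sign * t)

lemma IsZeta.isCellwiseConj {ρ : ℤ → Letter} (hρ : IsLabelling ρ) {ν ζ : ℝ ≃o ℝ}
    (hζ : IsZeta ρ ν ζ) : IsCellwiseConj ρ 1 (fun t => ν (t + 1 / 2) - 1 / 2) ζ := by
  intro k hk t ht
  obtain ⟨n, rfl⟩ : Odd k := Int.odd_iff.2 hk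
  obtain ⟨hlo, hhi⟩ := abs_le.1 ht
  obtain ⟨hb, hB⟩ := hζ n (((2 * n + 1 : ℤ) : ℝ) / 2 + t)
    ⟨by push_cast; linarith, by push_cast; linarith⟩
  rcases (hρ (2 * n + 1)).2 (odd_two_mul_add_one n) with hl | hl
  · rw [hb hl, hl, Letter.sign]
    push_cast
    ring_nf
  · rw [hB hl, hl, Letter.sign]
    push_cast
    ring_nf

lemma IsChi.isCellwiseConj {ρ : ℤ → Letter} (hρ : IsLabelling ρ) {ν χ : ℝ ≃o ℝ}
    (hχ : IsChi ρ ν χ) : IsCellwiseConj ρ 0 (fun t => ν (t + 1 / 2) - 1 / 2) χ := by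
  intro k hk t ht
  obtain ⟨n, rfl⟩ : 2 ∣ k := Int.modEq_zero_iff_dvd.1 hk
  obtain ⟨hlo, hhi⟩ := abs_le.1 ht
  obtain ⟨ha, hA⟩ := hχ n (((2 * n : ℤ) : ℝ) / 2 + t)
    ⟨by push_cast; linarith, by push_cast; linarith⟩
  rcases (hρ (2 * n)).1 (even_two_mul n) with hl | hl
  · rw [ha hl, hl, Letter.sign]
    push_cast
    ring_nf
  · rw [hA hl, hl, Letter.sign]
    push_cast
    ring_nf

lemma exists_modEq_two_abs_sub_le (e : ℤ) (x : ℝ) :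
    ∃ k : ℤ, k ≡ e [ZMOD 2] ∧ |x - k / 2| ≤ 1 / 2 := by
  refine ⟨2 * round (x - e / 2) + e, by simp [Int.ModEq], ?_⟩
  have hcentre : x - ((2 * round (x - e / 2) + e : ℤ) : ℝ) / 2
      = x - e / 2 - round (x - (e : ℝ) / 2) := by
    push_cast
    ring
  rw [hcentre]
  exact abs_sub_round _

namespace IsCellwiseConj

variable {ρ : ℤ → Letter} {e : ℤ} {μ f : ℝ → ℝ}

lemma abs_apply_sub_le (hf : IsCellwiseConj ρ e μ f) {C : ℝ} (hC : ∀ t, |t| ≤ 1 / 2 → |μ t - t| ≤ C)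
    (x : ℝ) : |f x - x| ≤ C := by
  obtain ⟨k, hk, ht⟩ := exists_modEq_two_abs_sub_le e x
  obtain ⟨t, rfl⟩ : ∃ t, x = k / 2 + t := ⟨x - k / 2, by ring⟩
  rw [add_sub_cancel_left] at ht
  set σ := (ρ k).sign
  have hσ : |σ| = 1 := (ρ k).abs_sign
  have hσσ : σ * σ = 1 := by rw [← abs_mul_abs_self, hσ, one_mul]
  calc |f (k / 2 + t) - (k / 2 + t)| = |σ * (μ (σ * t) - σ * t)| := by
        rw [hf k hk t ht]
        congr 1
        linear_combination t * hσσ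
    _ = |μ (σ * t) - σ * t| := by rw [abs_mul, hσ, one_mul]
    _ ≤ C := hC _ (by rwa [abs_mul, hσ, one_mul])

lemma map_sub (hf : IsCellwiseConj ρ e μ f) {c : ℤ} {x : ℝ} (hx : InvertsNear ρ c x (1 / 2)) :
    f (c - x) = c - f x := by
  obtain ⟨k, hk, ht⟩ := exists_modEq_two_abs_sub_le e x
  have hinv : ρ (2 * c - k) = (ρ k).inv := hx k (by rwa [abs_sub_comm])
  obtain ⟨t, rfl⟩ : ∃ t, x = k / 2 + t := ⟨x - k / 2, by ring⟩
  rw [add_sub_cancel_left] at ht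
  have hk' : 2 * c - k ≡ e [ZMOD 2] := by
    unfold Int.ModEq at hk ⊢
    omega
  have hreflected := hf _ hk' (-t) (by rwa [abs_neg])
  rw [hinv, Letter.sign_inv, neg_mul_neg] at hreflected
  calc f (c - (k / 2 + t)) = f ((2 * c - k : ℤ) / 2 + -t) := by
        congr 1
        push_cast
        ring
    _ = c - f (k / 2 + t) := by
        rw [hreflected, hf k hk t ht]
        push_cast
        ring

lemma exists_isReflectionEquivariant (hf : IsCellwiseConj ρ e μ f) (hμ : Continuous μ) :
    ∃ r, IsReflectionEquivariant ρ r f := by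
  obtain ⟨C, hC⟩ := (isCompact_Icc (a := (-(1 / 2) : ℝ)) (b := 1 / 2)).exists_bound_of_continuousOn
    (hμ.sub continuous_id).continuousOn
  have hdisp := hf.abs_apply_sub_le fun t ht => hC t (abs_le.1 ht)
  refine ⟨max C (1 / 2), fun x => (hdisp x).trans (le_max_left _ _), fun c x hx => ?_⟩
  exact hf.map_sub (hx.of_abs_sub_add_le (by simp))

end IsCellwiseConj

lemma closure_le_reflectionEquivariantSubgroup {ρ : ℤ → Letter} (hρ : IsLabelling ρ)
    {S : Set (ℝ ≃o ℝ)} (hS : ∀ f ∈ S, ∃ ν, IsZeta ρ ν f ∨ IsChi ρ ν f) :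
    Subgroup.closure S ≤ reflectionEquivariantSubgroup ρ := by
  refine (Subgroup.closure_le _).2 fun f hf => ?_
  obtain ⟨ν, hζ | hχ⟩ := hS f hf
  · exact (hζ.isCellwiseConj hρ).exists_isReflectionEquivariant (by fun_prop)
  · exact (hχ.isCellwiseConj hρ).exists_isReflectionEquivariant (by fun_prop)

/-! ### Fixed points -/

lemma exists_isFixedPt_of_map_sub {g : ℝ → ℝ} (hg : Continuous g) {c x : ℝ}
    (h : g (c - x) = c - g x) : ∃ y, Function.IsFixedPt g y := by
  rcases le_total x (g x) with hx | hx
  · obtain ⟨y, -, hy⟩ := exists_mem_uIcc_isFixedPt (a := x) (b := c - x) hg.continuousOn hx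
      (by linarith)
    exact ⟨y, hy⟩
  · obtain ⟨y, -, hy⟩ := exists_mem_uIcc_isFixedPt (a := c - x) (b := x) hg.continuousOn
      (by linarith) hx
    exact ⟨y, hy⟩

theorem every_element_fixes_a_point_general {ρ : ℤ → Letter} (hρ : IsLabelling ρ)
    (hinv : ∀ (k : ℤ) (n : ℕ), ∃ k' : ℤ, blockWord ρ k' n = wordInv (blockWord ρ k n))
    {S : Set (ℝ ≃o ℝ)} (hS : ∀ f ∈ S, ∃ ν, IsZeta ρ ν f ∨ IsChi ρ ν f) :
    ∀ g ∈ Subgroup.closure S, ∃ x : ℝ, g x = x := by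
  intro g hg
  obtain ⟨r, hr⟩ := closure_le_reflectionEquivariantSubgroup hρ hS hg
  obtain ⟨c, hc⟩ := exists_invertsNear hρ hinv 0 r
  exact exists_isFixedPt_of_map_sub g.continuous (hr.map_sub c 0 hc)

/-- For a quasi-periodic labelling `ρ`, every element of `G_ρ` fixes
a point of `ℝ`. -/
theorem every_element_fixes_a_point
    (ρ : ℤ → Letter) (hρ : IsQuasiPeriodic ρ)
    (H : Subgroup (ℝ ≃o ℝ)) (hH : ∀ f : ℝ ≃o ℝ, f ∈ H ↔ InH f)
    (ν₁ ν₂ ν₃ : ℝ ≃o ℝ) (hgen : Subgroup.closure {ν₁, ν₂, ν₃} = H)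
    (ζ₁ ζ₂ ζ₃ χ₁ χ₂ χ₃ : ℝ ≃o ℝ)
    (hζ₁ : IsZeta ρ ν₁ ζ₁) (hζ₂ : IsZeta ρ ν₂ ζ₂) (hζ₃ : IsZeta ρ ν₃ ζ₃)
    (hχ₁ : IsChi ρ ν₁ χ₁) (hχ₂ : IsChi ρ ν₂ χ₂) (hχ₃ : IsChi ρ ν₃ χ₃)
    (G : Subgroup (ℝ ≃o ℝ))
    (hG : G = Subgroup.closure {ζ₁, ζ₂, ζ₃, χ₁, χ₂, χ₃})
    : ∀ g ∈ G, ∃ x : ℝ, g x = x := by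
  intro g hg
  exact every_element_fixes_a_point_general hρ.1 hρ.2.2
    (by rintro f (rfl | rfl | rfl | rfl | rfl | rfl) <;> grind) g (hG ▸ hg)
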